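/- The following are equivalent: (a) U is not the only copy for G; (b) the set of copies has no isolated point in the powerset topology, i.e. for every copy C and all finite sets F ⊆ C and E ⊆ U \ C there exists a copy C' ≠ C with F ⊆ C' and C' ∩ E = ∅. -/

import Mathlib

/-- `f` is adherent to the subgroup `G` of permutations of `U`:
for every finite set `F` there is `g ∈ G` agreeing with `f` on `F`. -/
def IsAdherent {U : Type*} (G : Subgroup (Equiv.Perm U)) (f : U → U) : Prop :=
  ∀ F : Finset U, ∃ g ∈ G, ∀ x ∈ F, f x = g x

/-- `C` is a copy for the group `G`: the range of a function adherent to `G`. -/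
def IsCopy {U : Type*} (G : Subgroup (Equiv.Perm U)) (C : Set U) : Prop :=
  ∃ f : U → U, IsAdherent G f ∧ Set.range f = C

theorem IsAdherent.comp' {U : Type*} {G : Subgroup (Equiv.Perm U)} {f h : U → U}
    (hf : IsAdherent G f) (hh : IsAdherent G h) : IsAdherent G (f ∘ h) := by
  classical
  intro F
  obtain ⟨g1, hg1, h1⟩ := hh F
  obtain ⟨g2, hg2, h2⟩ := hf (F.image h)
  refine ⟨g2 * g1, G.mul_mem hg2 hg1, fun x hx => ?_⟩
  rw [Function.comp_apply, h2 _ (Finset.mem_image_of_mem h hx), h1 x hx, Equiv.Perm.mul_apply]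

theorem IsAdherent.inj' {U : Type*} {G : Subgroup (Equiv.Perm U)} {f : U → U}
    (hf : IsAdherent G f) : Function.Injective f := by
  classical
  intro x y hxy
  obtain ⟨g, _, h⟩ := hf {x, y}
  rw [h x (by simp), h y (by simp)] at hxy
  exact g.injective hxy

theorem IsAdherent.of_mem {U : Type*} {G : Subgroup (Equiv.Perm U)} {g : Equiv.Perm U}
    (hg : g ∈ G) : IsAdherent G g := fun _ => ⟨g, hg, fun _ _ => rfl⟩

/-- Theorem: `U` is not the only copy for `G` iff the set of copies has no isolated point
in the powerset topology: for every copy `C` and finite sets `F ⊆ C`, `E` disjoint from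
`C`, there is a copy `C' ≠ C` with `F ⊆ C'` and `C' ∩ E = ∅`. -/
theorem no_isolated_point_iff {U : Type*} [Countable U] [Infinite U]
    (G : Subgroup (Equiv.Perm U)) :
    (∃ C : Set U, IsCopy G C ∧ C ≠ Set.univ) ↔
      (∀ C : Set U, IsCopy G C → ∀ F E : Finset U, ↑F ⊆ C → ↑E ⊆ Cᶜ →
        ∃ C' : Set U, IsCopy G C' ∧ C' ≠ C ∧ ↑F ⊆ C' ∧ C' ∩ ↑E = ∅) := by
  classical
  constructor
  · rintro ⟨_, ⟨h, hh, rfl⟩, hne⟩ _ ⟨f, hf, rfl⟩ F E hF hE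
    obtain ⟨g, hg, hgK⟩ := hh (F.preimage f hf.inj'.injOn)
    refine ⟨_, ⟨f ∘ (⇑(g⁻¹) ∘ h),
      hf.comp' ((IsAdherent.of_mem (G.inv_mem hg)).comp' hh), rfl⟩, ?_, ?_, ?_⟩
    · intro heq
      apply hne
      rw [Set.eq_univ_iff_forall]
      intro y
      have hy : f (g⁻¹ y) ∈ Set.range (f ∘ (⇑(g⁻¹) ∘ h)) := heq ▸ Set.mem_range_self _
      obtain ⟨x, hx⟩ := hy
      exact ⟨x, (g⁻¹).injective (hf.inj' hx)⟩
    · intro y hy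
      obtain ⟨x, rfl⟩ := hF hy
      have hx := hgK x (by simpa using hy)
      exact ⟨x, by simp [hx]⟩
    · rw [Set.eq_empty_iff_forall_notMem]
      rintro _ ⟨⟨x, rfl⟩, hx⟩
      exact hE hx ⟨_, rfl⟩
  · intro H
    obtain ⟨C, hC, hne, -, -⟩ := H Set.univ
      ⟨_, IsAdherent.of_mem G.one_mem, (1 : Equiv.Perm U).surjective.range_eq⟩ ∅ ∅
      (by simp) (by simp)
    exact ⟨C, hC, hne⟩
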